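/- Let p, q be positive natural numbers, and let Y be a p×q real matrix with singular value decomposition Y = K₁ Σ K₂ᵀ, where K₁ is a p×p orthogonal matrix, K₂ is a q×q orthogonal matrix, and Σ is a p×q real matrix satisfying Σᵢⱼ = 0 whenever i ≠ j (as natural number indices) and Σᵢᵢ ≥ 0 for all i. Let I_{p,q} denote the p×q matrix whose (i,j) entry is 1 if i = j (as natural number indices) and 0 otherwise. Then for every p×q real matrix P satisfying PᵀP = I_q (the q×q identity), ‖K₁ I_{p,q} K₂ᵀ − Y‖_F ≤ ‖P − Y‖_F; i.e., P_Y = K₁ I_{p,q} K₂ᵀ minimizes (1/2)‖P − Y‖_F² subject to PᵀP = I_q. -/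

import Mathlib

/-!
The Frobenius norm is invariant under `A ↦ K₁ * A * K₂ᵀ`, so with `Q = K₁ᵀ * P * K₂` the claim
becomes `‖I_{p,q} - S‖ ≤ ‖Q - S‖`, where `Qᵀ * Q = 1`. This is proved column by column by
expanding the squares: each column of `Q` has norm `1` while each column of `I_{p,q}` has norm at
most `1`, and `Q i j * S i j ≤ I_{p,q} i j * S i j` entrywise, because `S` is diagonal with
nonnegative entries and the entries of `Q` are at most `1`.
-/

open Matrix

/-- The Frobenius norm of a rectangular real matrix. -/
noncomputable def frobNorm {p q : ℕ} (A : Matrix (Fin p) (Fin q) ℝ) : ℝ :=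
  Real.sqrt (∑ i, ∑ j, (A i j) ^ 2)

/-- The `p × q` matrix `I_{p,q}` with ones on the (natural-index) diagonal and zeros elsewhere. -/
def Ipq (p q : ℕ) : Matrix (Fin p) (Fin q) ℝ :=
  fun i j => if (i : ℕ) = (j : ℕ) then 1 else 0

lemma sum_sq_eq_trace {p q : ℕ} (A : Matrix (Fin p) (Fin q) ℝ) :
    ∑ i, ∑ j, (A i j) ^ 2 = (Aᵀ * A).trace := by
  rw [Finset.sum_comm]
  simp [Matrix.trace, Matrix.mul_apply, sq]

lemma frobNorm_orthogonal_mul {p q : ℕ} (A : Matrix (Fin p) (Fin q) ℝ)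
    (K₁ : Matrix (Fin p) (Fin p) ℝ) (K₂ : Matrix (Fin q) (Fin q) ℝ)
    (hK₁ : K₁ᵀ * K₁ = 1) (hK₂ : K₂ᵀ * K₂ = 1) :
    frobNorm (K₁ * A * K₂ᵀ) = frobNorm A := by
  unfold frobNorm
  rw [sum_sq_eq_trace, sum_sq_eq_trace]
  have h : (K₁ * A * K₂ᵀ)ᵀ * (K₁ * A * K₂ᵀ) = K₂ * (Aᵀ * A * K₂ᵀ) := by
    calc (K₁ * A * K₂ᵀ)ᵀ * (K₁ * A * K₂ᵀ)
        = K₂ * (Aᵀ * (K₁ᵀ * K₁) * A * K₂ᵀ) := by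
          simp only [Matrix.transpose_mul, Matrix.transpose_transpose, Matrix.mul_assoc]
      _ = K₂ * (Aᵀ * A * K₂ᵀ) := by rw [hK₁, Matrix.mul_one]
  rw [h, Matrix.trace_mul_comm, Matrix.mul_assoc, hK₂, Matrix.mul_one]

/-- Only `≤` holds in general: when `p < q` the columns of `I_{p,q}` with index at least `p`
vanish. -/
lemma sum_Ipq_sq_le {p q : ℕ} (j : Fin q) : ∑ i, (Ipq p q i j) ^ 2 ≤ 1 := by
  by_cases h : (j : ℕ) < p
  · rw [Finset.sum_eq_single (⟨j, h⟩ : Fin p)]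
    · simp [Ipq]
    · intro b _ hb
      have : (b : ℕ) ≠ j := fun e => hb (Fin.ext e)
      simp [Ipq, this]
    · simp
  · rw [Finset.sum_eq_zero]
    · exact zero_le_one
    · intro b _
      have : (b : ℕ) ≠ j := by omega
      simp [Ipq, this]

/-- The case of the projection theorem in which both orthogonal factors are the identity. -/
lemma frobNorm_Ipq_sub_le {p q : ℕ} (S Q : Matrix (Fin p) (Fin q) ℝ)
    (hSdiag : ∀ (i : Fin p) (j : Fin q), (i : ℕ) ≠ (j : ℕ) → S i j = 0)
    (hSpos : ∀ (i : Fin p) (j : Fin q), (i : ℕ) = (j : ℕ) → 0 ≤ S i j)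
    (hQ : Qᵀ * Q = 1) : frobNorm (Ipq p q - S) ≤ frobNorm (Q - S) := by
  unfold frobNorm
  apply Real.sqrt_le_sqrt
  rw [Finset.sum_comm, Finset.sum_comm (f := fun i j => ((Q - S) i j) ^ 2)]
  refine Finset.sum_le_sum fun j _ => ?_
  have hcol : ∑ i, (Q i j) ^ 2 = 1 := by
    have := congrFun (congrFun hQ j) j
    simpa [Matrix.mul_apply, sq] using this
  have hle : ∀ i, Q i j ≤ 1 := fun i => by
    have h1 : (Q i j) ^ 2 ≤ ∑ i, (Q i j) ^ 2 :=
      Finset.single_le_sum (f := fun i => (Q i j) ^ 2) (fun i _ => sq_nonneg _)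
        (Finset.mem_univ i)
    nlinarith
  have hcross : ∑ i, Q i j * S i j ≤ ∑ i, Ipq p q i j * S i j := by
    refine Finset.sum_le_sum fun i _ => ?_
    by_cases h : (i : ℕ) = j
    · have hI : Ipq p q i j = 1 := by simp [Ipq, h]
      rw [hI]
      exact mul_le_mul_of_nonneg_right (hle i) (hSpos i j h)
    · simp [hSdiag i j h]
  have expand : ∀ A : Matrix (Fin p) (Fin q) ℝ, ∑ i, ((A - S) i j) ^ 2 =
      ∑ i, (A i j) ^ 2 - 2 * ∑ i, A i j * S i j + ∑ i, (S i j) ^ 2 := fun A => by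
    rw [Finset.mul_sum, ← Finset.sum_sub_distrib, ← Finset.sum_add_distrib]
    refine Finset.sum_congr rfl fun i _ => ?_
    rw [Matrix.sub_apply]
    ring
  rw [expand, expand]
  linarith [sum_Ipq_sq_le (p := p) j]

/-- Closed-form solution of the orthogonally constrained Frobenius projection problem:
given an SVD `Y = K₁ S K₂ᵀ` (with `K₁, K₂` orthogonal and `S` diagonal with nonnegative
entries), the matrix `K₁ I_{p,q} K₂ᵀ` minimizes `‖P − Y‖_F` over all `P` with `Pᵀ P = 1`. -/
theorem soc_projection (p q : ℕ) (hp : 0 < p) (hq : 0 < q)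
    (Y : Matrix (Fin p) (Fin q) ℝ)
    (K₁ : Matrix (Fin p) (Fin p) ℝ) (K₂ : Matrix (Fin q) (Fin q) ℝ)
    (S : Matrix (Fin p) (Fin q) ℝ)
    (hK₁ : K₁ᵀ * K₁ = 1) (hK₂ : K₂ᵀ * K₂ = 1)
    (hSdiag : ∀ (i : Fin p) (j : Fin q), (i : ℕ) ≠ (j : ℕ) → S i j = 0)
    (hSpos : ∀ (i : Fin p) (j : Fin q), (i : ℕ) = (j : ℕ) → 0 ≤ S i j)
    (hY : Y = K₁ * S * K₂ᵀ) :
    ∀ P : Matrix (Fin p) (Fin q) ℝ, Pᵀ * P = 1 →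
      frobNorm (K₁ * Ipq p q * K₂ᵀ - Y) ≤ frobNorm (P - Y) := by
  intro P hP
  have hK₁' : K₁ * K₁ᵀ = 1 := mul_eq_one_comm.mp hK₁
  have hK₂' : K₂ * K₂ᵀ = 1 := mul_eq_one_comm.mp hK₂
  have hPQ : P = K₁ * (K₁ᵀ * P * K₂) * K₂ᵀ := by
    calc P = (K₁ * K₁ᵀ) * P * (K₂ * K₂ᵀ) := by simp [hK₁', hK₂']
      _ = _ := by simp only [Matrix.mul_assoc]
  have hQ : (K₁ᵀ * P * K₂)ᵀ * (K₁ᵀ * P * K₂) = 1 := by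
    calc (K₁ᵀ * P * K₂)ᵀ * (K₁ᵀ * P * K₂)
        = K₂ᵀ * (Pᵀ * (K₁ * K₁ᵀ) * P) * K₂ := by
          simp only [Matrix.transpose_mul, Matrix.transpose_transpose, Matrix.mul_assoc]
      _ = 1 := by rw [hK₁', Matrix.mul_one, hP, Matrix.mul_one, hK₂]
  have key : ∀ A : Matrix (Fin p) (Fin q) ℝ,
      frobNorm (K₁ * A * K₂ᵀ - Y) = frobNorm (A - S) := fun A => by
    rw [hY, ← Matrix.sub_mul, ← Matrix.mul_sub, frobNorm_orthogonal_mul _ _ _ hK₁ hK₂]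
  rw [hPQ, key, key]
  exact frobNorm_Ipq_sub_le S _ hSdiag hSpos hQ
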